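/- Every finite abelian subgroup of PGL₂(K), K algebraically closed of characteristic p ≥ 0, whose order is coprime to p (with no condition if p = 0), is either cyclic or isomorphic to Z/2 × Z/2. -/

import Mathlib

section helpers
variable {K : Type*} [Field K]

lemma scal_center {g : (Matrix (Fin 2) (Fin 2) K)ˣ} {z : K} (h : (g : Matrix (Fin 2) (Fin 2) K) = z • 1) :
    g ∈ Subgroup.center ((Matrix (Fin 2) (Fin 2) K)ˣ) := by
  rw [Subgroup.mem_center_iff]
  intro k
  ext1
  simp [h]

lemma center_scal {g : (Matrix (Fin 2) (Fin 2) K)ˣ} 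
   (hg :  g ∈ Subgroup.center ((Matrix (Fin 2) (Fin 2) K)ˣ)) : 
    ∃ z : K, z ≠ 0 ∧ (g : Matrix (Fin 2) (Fin 2) K) = z • 1 := by
  have := (Matrix.GeneralLinearGroup.center_eq_range_scalar (n := Fin 2) (R := K))
  change g ∈ Subgroup.center (Matrix.GeneralLinearGroup (Fin 2) K) at hg
  rw [this] at hg
  obtain ⟨z, rfl⟩ := hg
  refine ⟨z, z.ne_zero, ?_⟩
  simp [Matrix.smul_one_eq_diagonal]

lemma commutant (A X : Matrix (Fin 2) (Fin 2) K) (hA : ∀ z : K, A ≠ z • 1) (h : A * X = X * A) :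
    ∃ x y : K, X = x • 1 + y • A := by
  have e := fun i j => congrFun (congrFun h i) j
  have e00 := e 0 0
  have e01 := e 0 1
  have e10 := e 1 0
  have e11 := e 1 1
  simp only [Matrix.mul_apply, Fin.sum_univ_two] at e00 e01 e10 e11
  have key : ∀ x y : K, X 0 0 = x + y * A 0 0 → X 0 1 = y * A 0 1 → X 1 0 = y * A 1 0 →
      X 1 1 = x + y * A 1 1 → ∃ x y : K, X = x • 1 + y • A := by
    intro x y h1 h2 h3 h4
    refine ⟨x, y, ?_⟩
    ext i j
    fin_cases i <;> fin_cases j <;> simp [h1, h2, h3, h4]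
  by_cases hb : A 0 1 = 0
  · by_cases hc : A 1 0 = 0
    · have hd : A 0 0 - A 1 1 ≠ 0 := by
        intro hd
        apply hA (A 0 0)
        ext i j
        fin_cases i <;> fin_cases j <;> simp [hb, hc]
        exact (sub_eq_zero.mp hd).symm
      have h01 : X 0 1 = 0 := by
        apply (mul_eq_zero.mp (?_ : (A 0 0 - A 1 1) * X 0 1 = 0)).resolve_left hd
        rw [hb] at e01; linear_combination e01
      have h10 : X 1 0 = 0 := by
        apply (mul_eq_zero.mp (?_ : (A 0 0 - A 1 1) * X 1 0 = 0)).resolve_left hd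
        rw [hc] at e10; linear_combination -e10
      apply key (X 0 0 - (X 0 0 - X 1 1) / (A 0 0 - A 1 1) * A 0 0) ((X 0 0 - X 1 1) / (A 0 0 - A 1 1))
      · ring
      · simp [hb, h01]
      · simp [hc, h10]
      · field_simp
        ring
    · apply key (X 0 0 - X 1 0 / A 1 0 * A 0 0) (X 1 0 / A 1 0)
      · ring
      · field_simp; linear_combination -e00
      · field_simp
      · field_simp; linear_combination -e10
  · apply key (X 0 0 - X 0 1 / A 0 1 * A 0 0) (X 0 1 / A 0 1)
    · ring
    · field_simp
    · field_simp; linear_combination e00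
    · field_simp; linear_combination e01

lemma indep {A : Matrix (Fin 2) (Fin 2) K} (hA : ∀ z : K, A ≠ z • 1) {x y x' y' : K}
    (h : x • (1 : Matrix (Fin 2) (Fin 2) K) + y • A = x' • 1 + y' • A) : x = x' ∧ y = y' := by
  have hy : y = y' := by
    by_contra hne
    have hne' : y - y' ≠ 0 := sub_ne_zero.mpr hne
    apply hA ((x' - x) / (y - y'))
    have h2 : (y - y') • A = (x' - x) • (1 : Matrix (Fin 2) (Fin 2) K) := by
      rw [sub_smul, sub_smul, sub_eq_sub_iff_add_eq_add, add_comm, h, add_comm, add_comm]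
      
    rw [div_eq_inv_mul, mul_smul, ← h2, smul_smul, inv_mul_cancel₀ hne', one_smul]
  subst hy
  refine ⟨?_, rfl⟩
  have h' := add_right_cancel h
  have := congrFun (congrFun h' 0) 0
  simpa using this

lemma double_comm (A B X : Matrix (Fin 2) (Fin 2) K) (hAB : A * B ≠ B * A)
   (h1 : X * A = A * X) (h2 : X * B = B * X) : ∃ z : K, X = z • 1 := by
  by_contra! hX
  obtain ⟨x, y, rfl⟩ := commutant X A hX h1
  obtain ⟨x', y', rfl⟩ := commutant X B hX h2
  apply hAB
  simp [mul_add, add_mul, smul_smul, mul_comm]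
  abel

lemma charpoly_roots [IsAlgClosed K] (A : Matrix (Fin 2) (Fin 2) K) :
   ∃ l m : K, l + m = A.trace ∧ l * m = A.det ∧ A * A = (l + m) • A - (l * m) • 1 := by
  obtain ⟨l, hl⟩ := IsAlgClosed.exists_root A.charpoly (by rw [Matrix.charpoly_degree_eq_dim]; simp)
  rw [Polynomial.IsRoot, Matrix.charpoly_fin_two] at hl
  simp at hl
  refine ⟨l, A.trace - l, by ring, by linear_combination -hl, ?_⟩
  have : l * (A.trace - l) = A.det := by linear_combination -hl
  rw [this]
  ext i j
  fin_cases i <;> fin_cases j <;> simp [Matrix.trace_fin_two, Matrix.det_fin_two, Matrix.mul_apply] <;> ring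

lemma roots_ne {A : Matrix (Fin 2) (Fin 2) K} (hA : ∀ z : K, A ≠ z • 1) {l m : K}
    (hl : l ≠ 0) (hq : A * A = (l + m) • A - (l * m) • 1) {n : ℕ} (hn : (n : K) ≠ 0)
    {c : K} (hpow : A ^ n = c • 1) : l ≠ m := by
  rintro rfl
  have hp : ∀ k : ℕ, A ^ (k+1) = (-(k : K) * l ^ (k+1)) • 1 + ((k + 1 : K) * l ^ k) • A := by
    intro k
    induction k with
    | zero => simp
    | succ k ih =>
      rw [pow_succ, ih, add_mul, smul_mul_assoc, smul_mul_assoc, one_mul, hq]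
      push_cast
      module
  cases n with
  | zero => simp at hn
  | succ k =>
    rw [hp] at hpow
    have : _ ∧ ((k + 1 : K) * l ^ k) = 0 := indep hA (hpow.trans (by simp : _ = c • 1 + (0 : K) • A))
    have h := this.2
    push_cast at hn
    simp [hn, hl] at h

lemma det_lin {A : Matrix (Fin 2) (Fin 2) K} {l m x y : K} (h1 : l + m = A.trace) (h2 : l * m = A.det) :
    (x • 1 + y • A).det = (x + y * l) * (x + y * m) := by
  have : (x + y * l) * (x + y * m) = x^2 + x * y * (l + m) + y^2 * (l * m) := by ring
  rw [this, h1, h2]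
  simp [Matrix.trace_fin_two, Matrix.det_fin_two]
  ring

/-- the commuting case -/
lemma case_comm [IsAlgClosed K] {H : Type*} [Group H] [Finite H] (P : H → Matrix (Fin 2) (Fin 2) K)
    (hdet : ∀ h, (P h).det ≠ 0) (hmul : ∀ a b, ∃ z : K, z ≠ 0 ∧ P (a * b) = z • (P a * P b))
    (hone : ∃ z : K, P 1 = z • 1)
    (hscal : ∀ h, (∃ z : K, P h = z • 1) → h = 1) (hcard : (Nat.card H : K) ≠ 0)
    (hc : ∀ a b, P a * P b = P b * P a) : IsCyclic H := by
  by_cases htriv : ∀ h : H, h = 1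
  · exact ⟨1, fun h => by rw [htriv h]; exact Subgroup.mem_zpowers 1⟩
  push Not at htriv
  obtain ⟨a, ha⟩ := htriv
  have hA : ∀ z : K, P a ≠ z • 1 := fun z hz => ha (hscal a ⟨z, hz⟩)
  obtain ⟨l, m, h1, h2, hq⟩ := charpoly_roots (P a)
  have hl : l ≠ 0 := by
    rintro rfl
    exact hdet a (by rw [← h2, zero_mul])
  have hpow : ∀ n : ℕ, ∃ c : K, c ≠ 0 ∧ P a ^ (n + 1) = c • P (a ^ (n + 1)) := by
    intro n
    induction n with
    | zero => exact ⟨1, one_ne_zero, by simp⟩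
    | succ n ih =>
      obtain ⟨c, hc0, hc⟩ := ih
      obtain ⟨z, hz0, hz⟩ := hmul (a ^ (n + 1)) a
      refine ⟨c * z⁻¹, mul_ne_zero hc0 (inv_ne_zero hz0), ?_⟩
      rw [pow_succ, hc, pow_succ a (n + 1), hz, smul_smul, mul_assoc, inv_mul_cancel₀ hz0,
        smul_mul_assoc, mul_one]
  have hlm : l ≠ m := by
    obtain ⟨c, _, hcc⟩ := hpow (Nat.card H - 1)
    rw [Nat.sub_add_cancel Nat.card_pos, pow_card_eq_one'] at hcc
    obtain ⟨z, hz⟩ := hone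
    rw [hz, smul_smul] at hcc
    exact roots_ne hA hl hq hcard hcc
  choose x y hxy using fun h => commutant (P a) (P h) hA (hc a h)
  have hd : ∀ h, (x h + y h * l) * (x h + y h * m) ≠ 0 := by
    intro h
    rw [← det_lin h1 h2, ← hxy]
    exact hdet h
  have hm : ∀ h k, ∃ z : K, z ≠ 0 ∧ x (h * k) + y (h * k) * l = z * ((x h + y h * l) * (x k + y k * l)) ∧
      x (h * k) + y (h * k) * m = z * ((x h + y h * m) * (x k + y k * m)) := by
    intro h k
    obtain ⟨z, hz0, hz⟩ := hmul h k
    have e : x (h * k) • (1 : Matrix (Fin 2) (Fin 2) K) + y (h * k) • P a =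
        (z * (x h * x k - y h * y k * (l * m))) • 1 +
        (z * (x h * y k + y h * x k + y h * y k * (l + m))) • P a := by
      rw [← hxy, hz, hxy h, hxy k]
      simp only [add_mul, mul_add, smul_mul_assoc, mul_smul_comm, one_mul, mul_one, hq]
      module
    obtain ⟨e1, e2⟩ := indep hA e
    refine ⟨z, hz0, ?_, ?_⟩ <;> rw [e1, e2] <;> ring
  let f : H →* K := MonoidHom.mk' (M := H) (G := Kˣ)
    (fun h => Units.mk0 ((x h + y h * l) / (x h + y h * m))
      (div_ne_zero (left_ne_zero_of_mul (hd h)) (right_ne_zero_of_mul (hd h)))) (by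
    intro h k
    ext
    obtain ⟨z, hz0, e1, e2⟩ := hm h k
    simp only [Units.val_mk0, Units.val_mul]
    rw [e1, e2, mul_div_mul_left _ _ hz0, mul_div_mul_comm]) |> (Units.coeHom K).comp
  have hf : ∀ h, f h = (x h + y h * l) / (x h + y h * m) := fun h => rfl
  have hker : ∀ h, f h = 1 → h = 1 := by
    intro h hh
    rw [hf, div_eq_one_iff_eq (right_ne_zero_of_mul (hd h))] at hh
    have hy : y h = 0 := by
      have : y h * (l - m) = 0 := by linear_combination hh
      exact (mul_eq_zero.mp this).resolve_right (sub_ne_zero.mpr hlm)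
    exact hscal h ⟨x h, by rw [hxy h, hy]; simp⟩
  refine isCyclic_of_injective_ringHom (G := H) f ?_
  exact (injective_iff_map_eq_one f).mpr hker

lemma case_klein {H : Type*} [Group H] (P : H → Matrix (Fin 2) (Fin 2) K)
    (hmul : ∀ a b, ∃ z : K, z ≠ 0 ∧ P (a * b) = z • (P a * P b))
    (hone : ∃ z : K, P 1 = z • 1)
    (hscal : ∀ h, (∃ z : K, P h = z • 1) → h = 1)
    (hc : ∀ a b, P a * P b = P b * P a ∨ P a * P b = - (P b * P a))
    (a b : H) (hab : P a * P b ≠ P b * P a) : IsKleinFour H := by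
  have hanti := (hc a b).resolve_left hab
  have hprod : ∀ h k, (∃ z : K, P h * P k = z • 1) → h * k = 1 := by
    rintro h k ⟨z, hz⟩
    obtain ⟨w, _, hw⟩ := hmul h k
    exact hscal _ ⟨w * z, by rw [hw, hz, smul_smul]⟩
  have dc := fun X => double_comm (P a) (P b) X hab
  have haa : a * a = 1 := by
    apply hprod
    apply dc
    · rw [mul_assoc]
    · rw [mul_assoc, hanti, mul_neg, ← mul_assoc, hanti, neg_mul, neg_neg, mul_assoc]
  have hbb : b * b = 1 := by
    apply hprod
    apply dc
    · rw [← mul_assoc (P a), hanti, neg_mul, mul_assoc (P b) (P a), hanti, mul_neg, neg_neg, mul_assoc]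
    · rw [mul_assoc]
  have hba : P b * P a = - (P a * P b) := by rw [hanti, neg_neg]
  have hcomm : a * b = b * a := by
    have : (a * b) * (a * b) = 1 := by
      obtain ⟨w, _, hw⟩ := hmul a b
      apply hprod
      rw [hw]
      have : ∃ z : K, P a * P b * (P a * P b) = z • 1 := by
        apply dc
        · have e : P a * P b * P a = - (P a * (P a * P b)) := by rw [mul_assoc, hba, mul_neg]
          rw [mul_assoc, e, mul_neg, ← mul_assoc (P a * P b) (P a), e, neg_mul, neg_neg, mul_assoc]
        · have e : P a * P b * P b = - (P b * (P a * P b)) := by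
            rw [← mul_assoc, hba, neg_mul, neg_neg]
          rw [mul_assoc, e, mul_neg, ← mul_assoc (P a * P b) (P b), e, neg_mul, neg_neg, mul_assoc]
      obtain ⟨z, hz⟩ := this
      exact ⟨w * w * z, by rw [smul_mul_smul_comm, hz, smul_smul]⟩
    have e := eq_inv_of_mul_eq_one_left this
    rw [mul_inv_rev, inv_eq_of_mul_eq_one_left haa, inv_eq_of_mul_eq_one_left hbb] at e
    exact e
  have ha1 : a ≠ 1 := by
    rintro rfl
    obtain ⟨z, hz⟩ := hone
    exact hab (by simp [hz])
  have hb1 : b ≠ 1 := by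
    rintro rfl
    obtain ⟨z, hz⟩ := hone
    exact hab (by simp [hz])
  have hne : a ≠ b := by
    rintro rfl
    exact hab rfl
  have hinva := inv_eq_of_mul_eq_one_left haa
  have hinvb := inv_eq_of_mul_eq_one_left hbb
  have hall : ∀ h : H, h = 1 ∨ h = a ∨ h = b ∨ h = a * b := by
    intro h
    rcases hc h a with h1 | h1 <;> rcases hc h b with h2 | h2
    · left
      exact hscal h (dc _ h1 h2)
    · right; left
      have : h * a = 1 := by
        apply hprod
        apply dc
        · rw [h1, mul_assoc, h1]
        · rw [mul_assoc, hanti, mul_neg, ← mul_assoc, h2, neg_mul, neg_neg, mul_assoc]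
      rw [eq_inv_of_mul_eq_one_left this, hinva]
    · right; right; left
      have : h * b = 1 := by
        apply hprod
        apply dc
        · rw [mul_assoc, hba, mul_neg, ← mul_assoc, h1, neg_mul, neg_neg, mul_assoc]
        · rw [h2, mul_assoc, h2]
      rw [eq_inv_of_mul_eq_one_left this, hinvb]
    · right; right; right
      have : h * (a * b) = 1 := by
        obtain ⟨w, _, hw⟩ := hmul a b
        apply hprod
        rw [hw]
        have : ∃ z : K, P h * (P a * P b) = z • 1 := by
          apply dc
          · calc P h * (P a * P b) * P a = P h * P a * (P b * P a) := by noncomm_ring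
              _ = P a * (P h * (P a * P b)) := by rw [h1, hba]; noncomm_ring
          · calc P h * (P a * P b) * P b = - (P h * (P b * P a) * P b) := by rw [hba]; noncomm_ring
              _ = - (P h * P b * (P a * P b)) := by noncomm_ring
              _ = P b * (P h * (P a * P b)) := by rw [h2]; noncomm_ring
        obtain ⟨z, hz⟩ := this
        exact ⟨w * z, by rw [mul_smul_comm, hz, smul_smul]⟩
      rw [eq_inv_of_mul_eq_one_left this, mul_inv_rev, hinva, hinvb, hcomm]
  have hab1 : a * b ≠ 1 := fun h => hne (by rw [eq_inv_of_mul_eq_one_left h, hinvb])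
  constructor
  · classical
    have hu : (Set.univ : Set H) = (({1, a, b, a * b} : Finset H) : Set H) := by
      ext h
      simpa using hall h
    rw [← Set.ncard_univ, hu, Set.ncard_coe_finset, Finset.card_insert_of_notMem,
      Finset.card_insert_of_notMem, Finset.card_insert_of_notMem, Finset.card_singleton]
    · simpa using ha1
    · simpa [hne] using hb1
    · simp [ha1.symm, hb1.symm, hab1.symm]
  · have : Nontrivial H := ⟨a, 1, ha1⟩
    refine (Monoid.exponent_eq_prime_iff Nat.prime_two).mpr ?_
    intro h hh
    refine orderOf_eq_prime ?_ hh
    rw [pow_two]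
    rcases hall h with rfl | rfl | rfl | rfl
    · simp
    · exact haa
    · exact hbb
    · rw [mul_assoc, ← mul_assoc b, ← hcomm, mul_assoc a, hbb, mul_one, haa]

end helpers

/-- Every finite abelian subgroup of `PGL₂(K)`, for `K` algebraically closed of
characteristic `p ≥ 0`, whose order is coprime to `p` (with no condition if `p = 0`),
is either cyclic or isomorphic to `Z/2 × Z/2`. Here `PGL₂(K)` is realized as the
quotient of `GL₂(K) = (M₂(K))ˣ` by its center. -/
theorem stmt_13 (K : Type*) [Field K] [IsAlgClosed K]
    (H : Subgroup ((Matrix (Fin 2) (Fin 2) K)ˣ ⧸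
        Subgroup.center ((Matrix (Fin 2) (Fin 2) K)ˣ)))
    [Finite H] (hcomm : ∀ a b : H, a * b = b * a)
    (hord : ringChar K = 0 ∨ Nat.Coprime (Nat.card H) (ringChar K)) :
    IsCyclic H ∨
      Nonempty (H ≃* (Multiplicative (ZMod 2) × Multiplicative (ZMod 2))) := by
  classical
  have hex : ∀ h : H, ∃ g : (Matrix (Fin 2) (Fin 2) K)ˣ, (QuotientGroup.mk g : (Matrix (Fin 2) (Fin 2) K)ˣ ⧸
        Subgroup.center ((Matrix (Fin 2) (Fin 2) K)ˣ)) = h := fun h => QuotientGroup.mk_surjective _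
  choose L hL using hex
  let P : H → Matrix (Fin 2) (Fin 2) K := fun h => L h
  have hdet : ∀ h, (P h).det ≠ 0 := fun h =>
    ((Matrix.isUnit_iff_isUnit_det _).mp (L h).isUnit).ne_zero
  have hmul : ∀ a b, ∃ z : K, z ≠ 0 ∧ P (a * b) = z • (P a * P b) := by
    intro a b
    have : (QuotientGroup.mk (L a * L b) : (Matrix (Fin 2) (Fin 2) K)ˣ ⧸
        Subgroup.center ((Matrix (Fin 2) (Fin 2) K)ˣ)) = QuotientGroup.mk (L (a * b)) := by
      rw [QuotientGroup.mk_mul, hL, hL, hL, Subgroup.coe_mul]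
    rw [QuotientGroup.eq] at this
    obtain ⟨z, hz0, hz⟩ := center_scal this
    refine ⟨z, hz0, ?_⟩
    have e : L (a * b) = (L a * L b) * ((L a * L b)⁻¹ * L (a * b)) := by group
    have e' := congrArg Units.val e
    rw [Units.val_mul (L a * L b), hz] at e'
    simpa [P] using e'
  have hscal : ∀ h, (∃ z : K, P h = z • 1) → h = 1 := by
    rintro h ⟨z, hz⟩
    have := scal_center (g := L h) hz
    rw [← QuotientGroup.eq_one_iff, hL] at this
    exact Subtype.ext this
  have hone : ∃ z : K, P 1 = z • 1 := by
    have : L 1 ∈ Subgroup.center ((Matrix (Fin 2) (Fin 2) K)ˣ) := by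
      rw [← QuotientGroup.eq_one_iff, hL]; rfl
    obtain ⟨z, _, hz⟩ := center_scal this
    exact ⟨z, hz⟩
  have hcard : (Nat.card H : K) ≠ 0 := by
    intro h0
    have hd := (ringChar.spec K (Nat.card H)).mp h0
    rcases hord with h | h
    · rw [h, zero_dvd_iff] at hd
      exact Nat.card_pos.ne' hd
    · have h1 := Nat.eq_one_of_dvd_coprimes h hd dvd_rfl
      exact CharP.ringChar_ne_one h1
  have hc : ∀ a b, P a * P b = P b * P a ∨ P a * P b = - (P b * P a) := by
    intro a b
    obtain ⟨z, hz0, hz⟩ := hmul a b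
    obtain ⟨w, hw0, hw⟩ := hmul b a
    rw [hcomm a b, hw] at hz
    have e : P a * P b = (z⁻¹ * w) • (P b * P a) := by
      rw [mul_smul, hz, smul_smul, inv_mul_cancel₀ hz0, one_smul]
    have ed := congrArg Matrix.det e
    rw [Matrix.det_smul, Matrix.det_mul, Matrix.det_mul, mul_comm (P b).det, Fintype.card_fin] at ed
    have e2 : (z⁻¹ * w) ^ 2 = 1 := by
      have hne : (P a).det * (P b).det ≠ 0 := mul_ne_zero (hdet a) (hdet b)
      exact mul_right_cancel₀ hne (by rw [← ed, one_mul])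
    rcases eq_or_eq_neg_of_sq_eq_sq (z⁻¹ * w) 1 (by rw [e2, one_pow]) with h | h
    · left; rw [e, h, one_smul]
    · right; rw [e, h, neg_smul, one_smul]
  by_cases hall : ∀ a b, P a * P b = P b * P a
  · exact Or.inl (case_comm P hdet hmul hone hscal hcard hall)
  · push Not at hall
    obtain ⟨a, b, hab⟩ := hall
    right
    have := case_klein P hmul hone hscal hc a b hab
    obtain ⟨e⟩ := IsKleinFour.nonempty_mulEquiv (G₁ := H) (G₂ := Multiplicative (ZMod 2 × ZMod 2))
    exact ⟨e.trans (MulEquiv.prodMultiplicative _ _)⟩
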